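/- Let q be a prime power and let ν, m₁, m₂, t be positive integers with ν > m₁ ≥ t, ν > m₂ ≥ t, and 2ν ≥ 2m₁ + m₂ − t. Suppose ℱ ⊆ 𝒫_{m₁} and 𝒢 ⊆ 𝒫_{m₂} are nonempty cross t-intersecting families. Then |ℱ| ≤ [τ_t(ℱ) choose t]_q · [m₂−t+1 choose 1]_q^{τ_t(𝒢)−t} · N'(τ_t(𝒢);m₁;2ν). -/

import Mathlib

open Finset Module

noncomputable section

/-- Gaussian binomial coefficient `[n choose k]_q` as a rational number. -/
def gaussBinom (q n k : ℕ) : ℚ :=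
  ∏ i ∈ Finset.range k, ((q : ℚ) ^ ((n : ℤ) - i) - 1) / ((q : ℚ) ^ ((k : ℤ) - i) - 1)

/-- `N'(a; m; 2ν)`, the number of `m`-dim totally isotropic subspaces containing
a fixed `a`-dim one. -/
def Nprime (q a m ν : ℕ) : ℚ :=
  ∏ i ∈ Finset.Icc 1 (m - a), ((q : ℚ) ^ (2 * ((ν : ℤ) - m + i)) - 1) / ((q : ℚ) ^ (i : ℤ) - 1)

variable {K V : Type*} [Field K] [AddCommGroup V] [Module K V]

/-- A subspace is totally isotropic w.r.t. the bilinear form `f`. -/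
def TotallyIsotropic (f : V →ₗ[K] V →ₗ[K] K) (W : Submodule K V) : Prop :=
  ∀ x ∈ W, ∀ y ∈ W, f x y = 0

/-- `polar f m` = `𝒫_m`, the set of `m`-dimensional totally isotropic subspaces. -/
def polar (f : V →ₗ[K] V →ₗ[K] K) (m : ℕ) : Set (Submodule K V) :=
  {W | TotallyIsotropic f W ∧ finrank K W = m}

/-- `X` is a `t`-cover of the family `ℱ`. -/
def IsTCover (f : V →ₗ[K] V →ₗ[K] K) (t : ℕ) (ℱ : Set (Submodule K V))
    (X : Submodule K V) : Prop :=
  TotallyIsotropic f X ∧ ∀ F ∈ ℱ, t ≤ finrank K ↥(X ⊓ F)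

/-- `τ_t(ℱ)`, the minimum dimension of a `t`-cover of `ℱ`. -/
def tauCover (f : V →ₗ[K] V →ₗ[K] K) (t : ℕ) (ℱ : Set (Submodule K V)) : ℕ :=
  sInf {x | ∃ X, IsTCover f t ℱ X ∧ finrank K ↥X = x}

def C1 (f : V →ₗ[K] V →ₗ[K] K) (M T : Submodule K V) (m t : ℕ) : Set (Submodule K V) :=
  {F | F ∈ polar f m ∧ T ≤ F ∧ t + 1 ≤ finrank K ↥(F ⊓ M)}

def C2 (f : V →ₗ[K] V →ₗ[K] K) (M T : Submodule K V) (m : ℕ) : Set (Submodule K V) :=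
  {F | F ∈ polar f m ∧ T ≤ F} ∪ {F | F ∈ polar f m ∧ F ≤ M}

def C3 (f : V →ₗ[K] V →ₗ[K] K) (S : Submodule K V) (m : ℕ) : Set (Submodule K V) :=
  {F | F ∈ polar f m ∧ S ≤ F}

def C4 (f : V →ₗ[K] V →ₗ[K] K) (S : Submodule K V) (m t : ℕ) : Set (Submodule K V) :=
  {F | F ∈ polar f m ∧ t ≤ finrank K ↥(F ⊓ S)}

def s0 (q ν m s t : ℕ) : ℚ :=
  gaussBinom q (s - t) 1 * Nprime q (t + 1) m ν - q * gaussBinom q (s - t) 2 * Nprime q (t + 2) m ν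

/-!
Fix a subspace `S` and a family all of whose members containing `S` meet a subspace `W` in dimension
at least `t > dim (S ⊓ W)`. Counting pairs `(F, v)` with `S ≤ F` and `v ∈ F ⊓ W` outside `S` bounds
the number of members containing `S` by `(q ^ (dim W - k) - 1) / (q ^ (t - k) - 1)`, where
`k = dim (S ⊓ W)`, times the largest number of members containing some `S ⊔ K ∙ v`. So a bound
propagates from larger `S` to smaller ones, and the three factors come from three choices of `W`.
* For `dim S ≥ τ_t(𝒢)`, take `W` to be the orthogonal complement of `S`, which contains every
  totally isotropic subspace containing `S`; here `m₁` plays the role of `t`.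
* For `t ≤ dim S < τ_t(𝒢)`, `S` is not a `t`-cover of `𝒢`, so some `G ∈ 𝒢` can serve as `W`.
* For `dim S < t`, take `W` to be a minimum `t`-cover of `ℱ`, starting from `S = ⊥`.
-/

section GaussianCoefficients

theorem gaussBinom_zero_right (q n : ℕ) : gaussBinom q n 0 = 1 := by
  simp [gaussBinom]

theorem gaussBinom_one_right (q n : ℕ) : gaussBinom q n 1 = ((q : ℚ) ^ n - 1) / (q - 1) := by
  simp [gaussBinom]

theorem gaussBinom_succ_succ (q n k : ℕ) : gaussBinom q (n + 1) (k + 1) =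
    ((q : ℚ) ^ (n + 1) - 1) / ((q : ℚ) ^ (k + 1) - 1) * gaussBinom q n k := by
  simp only [gaussBinom, prod_range_succ', mul_comm, Nat.cast_succ, add_sub_add_right_eq_sub,
    Nat.cast_zero, sub_zero]
  norm_cast

theorem Nprime_self (q m ν : ℕ) : Nprime q m m ν = 1 := by
  simp [Nprime]

theorem Nprime_eq_mul_Nprime_succ (q : ℕ) {a m ν : ℕ} (ham : a < m) (hmν : m ≤ ν) :
    Nprime q a m ν =
      ((q : ℚ) ^ (2 * (ν - a)) - 1) / ((q : ℚ) ^ (m - a) - 1) * Nprime q (a + 1) m ν := by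
  obtain ⟨d, rfl⟩ : ∃ d, m = a + 1 + d := Nat.exists_eq_add_of_le ham
  have exponent : 2 * ((ν : ℤ) - (a + 1 + d : ℕ) + (d + 1 : ℕ)) = (2 * (ν - a) : ℕ) := by
    push_cast [Nat.cast_sub (show a ≤ ν by omega)]
    ring
  simp only [Nprime]
  rw [show a + 1 + d - a = d + 1 by omega, Nat.add_sub_cancel_left,
    prod_Icc_succ_top (by omega), mul_comm, exponent]
  norm_cast

theorem Nprime_nonneg {q : ℕ} (hq : 1 ≤ q) (a : ℕ) {m ν : ℕ} (hmν : m ≤ ν) :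
    0 ≤ Nprime q a m ν := by
  have hq' : (1 : ℚ) ≤ q := mod_cast hq
  exact prod_nonneg fun i _ ↦ div_nonneg
    (sub_nonneg.2 (one_le_zpow₀ hq' (by omega))) (sub_nonneg.2 (one_le_zpow₀ hq' (by omega)))

theorem pow_sub_one_div_pow_sub_one_le_gaussBinom {q m t k : ℕ} (hq : 1 < q) (hkt : k < t)
    (htm : t ≤ m) :
    ((q : ℚ) ^ (m - k) - 1) / ((q : ℚ) ^ (t - k) - 1) ≤ gaussBinom q (m - t + 1) 1 := by
  obtain ⟨j, rfl⟩ : ∃ j, t = k + 1 + j := Nat.exists_eq_add_of_le hkt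
  obtain ⟨n, rfl⟩ : ∃ n, m = k + 1 + j + n := Nat.exists_eq_add_of_le htm
  have hq' : (1 : ℚ) < q := mod_cast hq
  rw [gaussBinom_one_right, show k + 1 + j + n - k = n + j + 1 by omega,
    show k + 1 + j - k = j + 1 by omega, Nat.add_sub_cancel_left,
    div_le_div_iff₀ (sub_pos.2 (one_lt_pow₀ hq' (by omega))) (sub_pos.2 hq')]
  have difference_nonneg : 0 ≤ (q : ℚ) * ((q ^ n - 1) * (q ^ j - 1)) :=
    mul_nonneg (by positivity) (mul_nonneg
      (sub_nonneg.2 (one_le_pow₀ hq'.le)) (sub_nonneg.2 (one_le_pow₀ hq'.le)))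
  linear_combination difference_nonneg

end GaussianCoefficients

section TotallyIsotropic

variable {f : V →ₗ[K] V →ₗ[K] K} {S F : Submodule K V}

theorem TotallyIsotropic.mono (hF : TotallyIsotropic f F) (hSF : S ≤ F) : TotallyIsotropic f S :=
  fun x hx y hy ↦ hF x (hSF hx) y (hSF hy)

theorem TotallyIsotropic.le_orthogonal (hF : TotallyIsotropic f F) (hSF : S ≤ F) :
    F ≤ LinearMap.BilinForm.orthogonal f S :=
  fun x hx y hy ↦ hF y (hSF hy) x hx

theorem TotallyIsotropic.two_mul_finrank_le [FiniteDimensional K V] (hf : f.Nondegenerate)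
    (hF : TotallyIsotropic f F) : 2 * finrank K F ≤ finrank K V := by
  have := Submodule.finrank_mono (hF.le_orthogonal le_rfl)
  rw [LinearMap.BilinForm.finrank_orthogonal hf] at this
  have := F.finrank_le
  omega

end TotallyIsotropic

section Covers

variable {f : V →ₗ[K] V →ₗ[K] K} {t : ℕ} {ℱ : Set (Submodule K V)} {X : Submodule K V}

theorem IsTCover.tauCover_le_finrank (hX : IsTCover f t ℱ X) : tauCover f t ℱ ≤ finrank K X :=
  Nat.sInf_le ⟨X, hX, rfl⟩

theorem IsTCover.exists_finrank_eq_tauCover (hX : IsTCover f t ℱ X) :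
    ∃ Y, IsTCover f t ℱ Y ∧ finrank K Y = tauCover f t ℱ :=
  Nat.sInf_mem (s := {x | ∃ Y, IsTCover f t ℱ Y ∧ finrank K Y = x}) ⟨_, X, hX, rfl⟩

theorem IsTCover.le_finrank [FiniteDimensional K V] (hX : IsTCover f t ℱ X) (hℱ : ℱ.Nonempty) :
    t ≤ finrank K X :=
  (hX.2 _ hℱ.some_mem).trans (Submodule.finrank_mono inf_le_left)

theorem IsTCover.le_tauCover [FiniteDimensional K V] (hX : IsTCover f t ℱ X) (hℱ : ℱ.Nonempty) :
    t ≤ tauCover f t ℱ := by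
  obtain ⟨Y, hY, hYdim⟩ := hX.exists_finrank_eq_tauCover
  exact hYdim ▸ hY.le_finrank hℱ

theorem TotallyIsotropic.exists_finrank_inf_lt_of_finrank_lt_tauCover (hX : TotallyIsotropic f X)
    (hlt : finrank K X < tauCover f t ℱ) : ∃ F ∈ ℱ, finrank K ↥(X ⊓ F) < t := by
  by_contra! hcover
  exact hlt.not_ge (IsTCover.tauCover_le_finrank ⟨hX, hcover⟩)

end Covers

/-- The members of the family `𝒜` that contain the subspace `S`. -/
def membersAbove (𝒜 : Set (Submodule K V)) (S : Submodule K V) : Set (Submodule K V) :=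
  {F ∈ 𝒜 | S ≤ F}

theorem membersAbove_bot (𝒜 : Set (Submodule K V)) : membersAbove 𝒜 ⊥ = 𝒜 := by
  simp [membersAbove]

theorem membersAbove_mono {𝒜 ℬ : Set (Submodule K V)} (h : 𝒜 ⊆ ℬ) (S : Submodule K V) :
    membersAbove 𝒜 S ⊆ membersAbove ℬ S :=
  fun _ hF ↦ ⟨h hF.1, hF.2⟩

theorem mem_membersAbove_sup_span_singleton {𝒜 : Set (Submodule K V)} {S F : Submodule K V}
    {v : V} : F ∈ membersAbove 𝒜 (S ⊔ K ∙ v) ↔ F ∈ membersAbove 𝒜 S ∧ v ∈ F := by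
  simp only [membersAbove, Set.mem_ofPred_eq, sup_le_iff, Submodule.span_singleton_le_iff_mem,
    and_assoc]

section Counting

variable [FiniteDimensional K V]

theorem ncard_coe_submodule (U : Submodule K V) :
    (U : Set V).ncard = Nat.card K ^ finrank K U :=
  Module.natCard_eq_pow_finrank (K := K) (V := U)

variable [Finite K]

theorem ncard_diff_coe_submodule (U S : Submodule K V) :
    (((U : Set V) \ S).ncard : ℚ) =
      (Nat.card K : ℚ) ^ finrank K U - (Nat.card K : ℚ) ^ finrank K ↥(U ⊓ S) := by
  have : Finite V := Module.finite_of_finite K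
  have h := Set.ncard_inter_add_ncard_sdiff_eq_ncard (U : Set V) S
  rw [← Submodule.coe_inf, ncard_coe_submodule, ncard_coe_submodule] at h
  rw [eq_sub_iff_add_eq']
  exact_mod_cast h

variable {𝒜 : Set (Submodule K V)} {S W : Submodule K V} {t : ℕ} {c : ℚ}

theorem ncard_membersAbove_mul_le (hW : ∀ F ∈ membersAbove 𝒜 S, t ≤ finrank K ↥(F ⊓ W))
    (hc : ∀ v ∈ W, v ∉ S → ((membersAbove 𝒜 (S ⊔ K ∙ v)).ncard : ℚ) ≤ c) :
    ((membersAbove 𝒜 S).ncard : ℚ) *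
        ((Nat.card K : ℚ) ^ t - (Nat.card K : ℚ) ^ finrank K ↥(S ⊓ W)) ≤
      ((Nat.card K : ℚ) ^ finrank K W - (Nat.card K : ℚ) ^ finrank K ↥(S ⊓ W)) * c := by
  classical
  have : Finite V := Module.finite_of_finite K
  have := Fintype.ofFinite V
  have := Fintype.ofFinite (Submodule K V)
  have one_le_card : (1 : ℚ) ≤ Nat.card K := mod_cast Nat.card_pos
  have many_vectors : ∀ F ∈ (membersAbove 𝒜 S).toFinset,
      (Nat.card K : ℚ) ^ t - (Nat.card K : ℚ) ^ finrank K ↥(S ⊓ W) ≤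
        #(bipartiteAbove (fun F v ↦ v ∈ F) ((W : Set V) \ S).toFinset F) := by
    intro F hF
    rw [Set.mem_toFinset] at hF
    have vectors_eq : bipartiteAbove (fun F v ↦ v ∈ F) ((W : Set V) \ S).toFinset F =
        (((F ⊓ W : Submodule K V) : Set V) \ S).toFinset := by
      ext v
      simp [and_comm, and_assoc]
    rw [vectors_eq, ← Set.ncard_eq_toFinset_card', ncard_diff_coe_submodule,
      show F ⊓ W ⊓ S = S ⊓ W by rw [inf_right_comm, inf_eq_right.2 hF.2]]
    gcongr
    exact hW F hF
  have few_members : ∀ v ∈ ((W : Set V) \ S).toFinset,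
      (#(bipartiteBelow (fun F v ↦ v ∈ F) (membersAbove 𝒜 S).toFinset v) : ℚ) ≤ c := by
    intro v hv
    rw [Set.mem_toFinset] at hv
    have members_eq : bipartiteBelow (fun F v ↦ v ∈ F) (membersAbove 𝒜 S).toFinset v =
        (membersAbove 𝒜 (S ⊔ K ∙ v)).toFinset := by
      ext F
      simp [mem_membersAbove_sup_span_singleton]
    rw [members_eq, ← Set.ncard_eq_toFinset_card']
    exact hc v hv.1 hv.2
  have double_count := card_nsmul_le_card_nsmul _ many_vectors few_members
  rwa [nsmul_eq_mul, nsmul_eq_mul, ← Set.ncard_eq_toFinset_card', ← Set.ncard_eq_toFinset_card',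
    ncard_diff_coe_submodule, inf_comm W S] at double_count

theorem ncard_membersAbove_le_div_mul (hSW : finrank K ↥(S ⊓ W) < t)
    (hW : ∀ F ∈ membersAbove 𝒜 S, t ≤ finrank K ↥(F ⊓ W))
    (hc : ∀ v ∈ W, v ∉ S → ((membersAbove 𝒜 (S ⊔ K ∙ v)).ncard : ℚ) ≤ c) :
    ((membersAbove 𝒜 S).ncard : ℚ) ≤
      ((Nat.card K : ℚ) ^ (finrank K W - finrank K ↥(S ⊓ W)) - 1) /
        ((Nat.card K : ℚ) ^ (t - finrank K ↥(S ⊓ W)) - 1) * c := by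
  have hq : (1 : ℚ) < Nat.card K := mod_cast Finite.one_lt_card
  have hpos : (0 : ℚ) < (Nat.card K : ℚ) ^ finrank K ↥(S ⊓ W) := by positivity
  have hcount := ncard_membersAbove_mul_le hW hc
  rw [← pow_sub_mul_pow _ hSW.le,
    ← pow_sub_mul_pow _ (Submodule.finrank_mono (inf_le_right : S ⊓ W ≤ W))] at hcount
  rw [div_mul_eq_mul_div, le_div_iff₀ (sub_pos.2 (one_lt_pow₀ hq (by omega)))]
  exact le_of_mul_le_mul_right (by linear_combination hcount) hpos

theorem ncard_membersAbove_polar_le {ν m : ℕ} {f : V →ₗ[K] V →ₗ[K] K} (hf : f.Nondegenerate)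
    (hV : finrank K V = 2 * ν) (hmν : m ≤ ν) (hS : finrank K S ≤ m) :
    ((membersAbove (polar f m) S).ncard : ℚ) ≤ Nprime (Nat.card K) (finrank K S) m ν := by
  induction hd : m - finrank K S generalizing S with
  | zero =>
    have hSm : finrank K S = m := by omega
    have only_S : membersAbove (polar f m) S ⊆ {S} := fun F hF ↦
      (Submodule.eq_of_le_of_finrank_eq hF.2 (hSm.trans hF.1.2.symm)).symm
    rw [hSm, Nprime_self]
    exact_mod_cast (Set.ncard_le_ncard only_S).trans_eq (Set.ncard_singleton S)
  | succ d ih =>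
    rcases (membersAbove (polar f m) S).eq_empty_or_nonempty with hempty | ⟨F₀, hF₀⟩
    · rw [hempty, Set.ncard_empty, Nat.cast_zero]
      exact Nprime_nonneg Nat.card_pos _ hmν
    have hSorth : S ⊓ LinearMap.BilinForm.orthogonal f S = S :=
      inf_eq_left.2 (hF₀.2.trans (hF₀.1.1.le_orthogonal hF₀.2))
    have hstep := ncard_membersAbove_le_div_mul (𝒜 := polar f m) (t := m)
      (W := LinearMap.BilinForm.orthogonal f S) (c := Nprime (Nat.card K) (finrank K S + 1) m ν)
      (by rw [hSorth]; omega)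
      (fun F hF ↦ by rw [inf_eq_left.2 (hF.1.1.le_orthogonal hF.2), hF.1.2])
      (fun v _ hv ↦ by
        have hdim := Submodule.finrank_sup_span_singleton hv
        exact hdim ▸ ih (by omega) (by omega))
    rwa [hSorth, LinearMap.BilinForm.finrank_orthogonal hf, hV,
      show 2 * ν - finrank K S - finrank K S = 2 * (ν - finrank K S) by omega,
      ← Nprime_eq_mul_Nprime_succ _ (by omega) hmν] at hstep

theorem ncard_membersAbove_le_gaussBinom_pow_mul {𝒢 : Set (Submodule K V)} {m n : ℕ} (hc₀ : 0 ≤ c)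
    (h𝒢 : ∀ G ∈ 𝒢, finrank K G = m) (hcross : ∀ F ∈ 𝒜, ∀ G ∈ 𝒢, t ≤ finrank K ↥(F ⊓ G))
    (hsmall : ∀ T : Submodule K V, finrank K T < n → (membersAbove 𝒜 T).Nonempty →
      ∃ G ∈ 𝒢, finrank K ↥(T ⊓ G) < t)
    (hc : ∀ T : Submodule K V, finrank K T = n → ((membersAbove 𝒜 T).ncard : ℚ) ≤ c)
    (hS : finrank K S ≤ n) :
    ((membersAbove 𝒜 S).ncard : ℚ) ≤
      gaussBinom (Nat.card K) (m - t + 1) 1 ^ (n - finrank K S) * c := by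
  have gauss_nonneg : 0 ≤ gaussBinom (Nat.card K) (m - t + 1) 1 := by
    have hq : (1 : ℚ) ≤ Nat.card K := mod_cast Nat.card_pos
    rw [gaussBinom_one_right]
    exact div_nonneg (sub_nonneg.2 (one_le_pow₀ hq)) (sub_nonneg.2 hq)
  induction hd : n - finrank K S generalizing S with
  | zero => simpa using hc S (by omega)
  | succ d ih =>
    rcases (membersAbove 𝒜 S).eq_empty_or_nonempty with hempty | hne
    · rw [hempty, Set.ncard_empty, Nat.cast_zero]
      positivity
    obtain ⟨G, hG, hSG⟩ := hsmall S (by omega) hne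
    have htm : t ≤ m := h𝒢 G hG ▸
      (hcross _ hne.some_mem.1 G hG).trans (Submodule.finrank_mono inf_le_right)
    calc ((membersAbove 𝒜 S).ncard : ℚ)
        ≤ ((Nat.card K : ℚ) ^ (m - finrank K ↥(S ⊓ G)) - 1) /
            ((Nat.card K : ℚ) ^ (t - finrank K ↥(S ⊓ G)) - 1) *
            (gaussBinom (Nat.card K) (m - t + 1) 1 ^ d * c) :=
          h𝒢 G hG ▸ ncard_membersAbove_le_div_mul hSG (fun F hF ↦ hcross F hF.1 G hG)
            (fun v _ hv ↦ by
              have hdim := Submodule.finrank_sup_span_singleton hv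
              exact h𝒢 G hG ▸ ih (by omega) (by omega))
      _ ≤ gaussBinom (Nat.card K) (m - t + 1) 1 *
            (gaussBinom (Nat.card K) (m - t + 1) 1 ^ d * c) := by
          gcongr
          exact pow_sub_one_div_pow_sub_one_le_gaussBinom Finite.one_lt_card hSG htm
      _ = gaussBinom (Nat.card K) (m - t + 1) 1 ^ (d + 1) * c := by ring

theorem ncard_membersAbove_le_gaussBinom_mul {X : Submodule K V}
    (hX : ∀ F ∈ 𝒜, t ≤ finrank K ↥(X ⊓ F))
    (hc : ∀ T ≤ X, finrank K T = t → ((membersAbove 𝒜 T).ncard : ℚ) ≤ c)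
    (hSX : S ≤ X) (hS : finrank K S ≤ t) (htX : t ≤ finrank K X) :
    ((membersAbove 𝒜 S).ncard : ℚ) ≤
      gaussBinom (Nat.card K) (finrank K X - finrank K S) (t - finrank K S) * c := by
  induction hd : t - finrank K S generalizing S with
  | zero => simpa [gaussBinom_zero_right] using hc S hSX (by omega)
  | succ d ih =>
    have hstep := ncard_membersAbove_le_div_mul (𝒜 := 𝒜) (S := S) (W := X) (t := t)
      (c := gaussBinom (Nat.card K) (finrank K X - (finrank K S + 1)) d * c)
      (by rw [inf_eq_left.2 hSX]; omega)
      (fun F hF ↦ inf_comm X F ▸ hX F hF.1)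
      (fun v hvX hv ↦ by
        have hdim := Submodule.finrank_sup_span_singleton hv
        exact hdim ▸ ih (sup_le hSX (by simpa using hvX)) (by omega) (by omega))
    have hcodim : finrank K X - finrank K S = finrank K X - (finrank K S + 1) + 1 := by omega
    rwa [inf_eq_left.2 hSX, hd, hcodim, ← mul_assoc, ← gaussBinom_succ_succ, ← hcodim] at hstep

theorem ncard_le_gaussBinom_mul {X : Submodule K V} (hX : ∀ F ∈ 𝒜, t ≤ finrank K ↥(X ⊓ F))
    (hc : ∀ T ≤ X, finrank K T = t → ((membersAbove 𝒜 T).ncard : ℚ) ≤ c)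
    (htX : t ≤ finrank K X) :
    (𝒜.ncard : ℚ) ≤ gaussBinom (Nat.card K) (finrank K X) t * c := by
  simpa [membersAbove_bot] using
    ncard_membersAbove_le_gaussBinom_mul hX hc bot_le (by simp) htX

theorem ncard_membersAbove_le_gaussBinom_pow_mul_Nprime {ν m₁ m₂ : ℕ} {f : V →ₗ[K] V →ₗ[K] K}
    (hf : f.Nondegenerate) (hV : finrank K V = 2 * ν) (hm₁ν : m₁ ≤ ν)
    {ℱ 𝒢 : Set (Submodule K V)} (hℱ : ℱ ⊆ polar f m₁) (h𝒢 : 𝒢 ⊆ polar f m₂)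
    (hcross : ∀ F ∈ ℱ, ∀ G ∈ 𝒢, t ≤ finrank K ↥(F ⊓ G)) (hτ : tauCover f t 𝒢 ≤ m₁)
    (hS : finrank K S ≤ tauCover f t 𝒢) :
    ((membersAbove ℱ S).ncard : ℚ) ≤
      gaussBinom (Nat.card K) (m₂ - t + 1) 1 ^ (tauCover f t 𝒢 - finrank K S) *
        Nprime (Nat.card K) (tauCover f t 𝒢) m₁ ν := by
  have : Finite V := Module.finite_of_finite K
  refine ncard_membersAbove_le_gaussBinom_pow_mul (Nprime_nonneg Nat.card_pos _ hm₁ν)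
    (fun G hG ↦ (h𝒢 hG).2) hcross (fun T hT ⟨F, hF⟩ ↦ ?_) (fun T hT ↦ ?_) hS
  · exact ((hℱ hF.1).1.mono hF.2).exists_finrank_inf_lt_of_finrank_lt_tauCover hT
  · calc ((membersAbove ℱ T).ncard : ℚ)
        ≤ (membersAbove (polar f m₁) T).ncard := by
          exact_mod_cast Set.ncard_le_ncard (membersAbove_mono hℱ T)
      _ ≤ Nprime (Nat.card K) (tauCover f t 𝒢) m₁ ν :=
          hT ▸ ncard_membersAbove_polar_le hf hV hm₁ν (hT.trans_le hτ)

theorem stmt_8_general {ν m₁ m₂ : ℕ} {f : V →ₗ[K] V →ₗ[K] K} (hf : f.Nondegenerate)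
    (hV : finrank K V = 2 * ν) {ℱ 𝒢 : Set (Submodule K V)} (hFne : ℱ.Nonempty) (hGne : 𝒢.Nonempty)
    (hℱ : ℱ ⊆ polar f m₁) (h𝒢 : 𝒢 ⊆ polar f m₂)
    (hcross : ∀ F ∈ ℱ, ∀ G ∈ 𝒢, t ≤ finrank K ↥(F ⊓ G)) :
    (ℱ.ncard : ℚ) ≤ gaussBinom (Nat.card K) (tauCover f t ℱ) t *
      gaussBinom (Nat.card K) (m₂ - t + 1) 1 ^ (tauCover f t 𝒢 - t) *
      Nprime (Nat.card K) (tauCover f t 𝒢) m₁ ν := by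
  obtain ⟨F₀, hF₀⟩ := hFne
  obtain ⟨G₀, hG₀⟩ := hGne
  have hF₀cover : IsTCover f t 𝒢 F₀ := ⟨(hℱ hF₀).1, hcross F₀ hF₀⟩
  have hG₀cover : IsTCover f t ℱ G₀ :=
    ⟨(h𝒢 hG₀).1, fun F hF ↦ inf_comm F G₀ ▸ hcross F hF G₀ hG₀⟩
  obtain ⟨X, hX, hXdim⟩ := hG₀cover.exists_finrank_eq_tauCover
  have hτ : tauCover f t 𝒢 ≤ m₁ := (hℱ hF₀).2 ▸ hF₀cover.tauCover_le_finrank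
  have htτ : t ≤ tauCover f t 𝒢 := hF₀cover.le_tauCover ⟨G₀, hG₀⟩
  have hm₁ν : m₁ ≤ ν := by
    have := (hℱ hF₀).1.two_mul_finrank_le hf
    rw [(hℱ hF₀).2] at this
    omega
  rw [mul_assoc, ← hXdim]
  refine ncard_le_gaussBinom_mul hX.2 (fun T _ hT ↦ ?_) (hX.le_finrank ⟨F₀, hF₀⟩)
  have hT_bound := ncard_membersAbove_le_gaussBinom_pow_mul_Nprime hf hV hm₁ν hℱ h𝒢 hcross hτ
    (hT.trans_le htτ)
  rwa [hT] at hT_bound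

end Counting

theorem stmt_8
    (q ν m₁ m₂ t : ℕ) (hq : IsPrimePow q)
    {K : Type} [Field K] [Fintype K] (hK : Fintype.card K = q)
    (f : (Fin (2 * ν) → K) →ₗ[K] (Fin (2 * ν) → K) →ₗ[K] K)
    (halt : ∀ v, f v v = 0)
    (hnd : ∀ v, (∀ w, f v w = 0) → v = 0)
    (ht : 0 < t) (hm₁ : t ≤ m₁) (hm₂ : t ≤ m₂) (hm₁ν : m₁ < ν) (hm₂ν : m₂ < ν)
    (hdim : 2 * m₁ + m₂ ≤ 2 * ν + t)
    (ℱ 𝒢 : Set (Submodule K (Fin (2 * ν) → K)))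
    (hFne : ℱ.Nonempty) (hGne : 𝒢.Nonempty)
    (hFsub : ℱ ⊆ polar f m₁) (hGsub : 𝒢 ⊆ polar f m₂)
    (hcross : ∀ F ∈ ℱ, ∀ G ∈ 𝒢, t ≤ finrank K ↥(F ⊓ G)) :
    (ℱ.ncard : ℚ) ≤ gaussBinom q (tauCover f t ℱ) t *
      gaussBinom q (m₂ - t + 1) 1 ^ (tauCover f t 𝒢 - t) *
      Nprime q (tauCover f t 𝒢) m₁ ν := by
  subst hK
  rw [← Nat.card_eq_fintype_card]
  exact stmt_8_general (LinearMap.BilinForm.Nondegenerate.ofSeparatingLeft hnd) (by simp)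
    hFne hGne hFsub hGsub hcross

end
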